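/- Suppose X ⊆ ℝ^{n_x} contains the origin in its interior and is robustly invariant for the system x_{k+1} = f(x_k, w_k), where W ⊆ ℝ^{n_w} is bounded with 0 ∈ W and f is Lipschitz continuous on X × W. Suppose there exist a Lipschitz continuous function V : X → [0,∞) and K∞-functions α1, α2, α3 such that α1(‖x‖) ≤ V(x) ≤ α2(‖x‖) and V(f(x,0)) − V(x) ≤ −α3(‖x‖) for all x ∈ X. Then there exists a K-function σ such that V(f(x,w)) − V(x) ≤ −α3(‖x‖) + σ(‖w‖) for all x ∈ X and w ∈ W (i.e. V is an ISS-Lyapunov function), and consequently the origin is ISS for the system with region of attraction X. -/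

import Mathlib

/-!
Lipschitz continuity of `V` and `f` gives `V (f x w) ≤ V (f x 0) + c ‖w‖` for a constant `c > 0`,
so `σ s = c * s` works.

For the ISS estimate put `ρ = α₃ ∘ α₂⁻¹`, so that `v k = V (x k)` satisfies
`v (k+1) ≤ v k - ρ (v k) + d` with `d = c * sup ‖w‖`. The sublevel set `v ≤ ρ⁻¹ (2 d) + d` is
invariant: inside it either `ρ v ≥ 2 d` and `v` does not increase, or `v < ρ⁻¹ (2 d)` and `v` grows
by at most `d`. As long as it has not been entered, `v (j+1) ≤ v j - ρ (v j) / 2`, and since `v` is then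
decreasing, summation yields `v k + (k/2) ρ (v k) ≤ v 0` (`decay_or_small`). Hence
`v k ≤ (id + (k/2) ρ)⁻¹ (v 0)`, and the map `(s, t) ↦ (id + (t/2) ρ)⁻¹ s` is an explicit
KL-function (`exists_KL`). Composing with `α₁⁻¹` and `α₂` gives `β`, and
`γ r = α₁⁻¹ (ρ⁻¹ (2 c r) + c r)`.
-/

open Filter Topology MeasureTheory Bornology

/-- A K-function: continuous, strictly increasing on `[0,∞)` and vanishing at `0`. -/
def IsKFun (φ : ℝ → ℝ) : Prop :=
  ContinuousOn φ (Set.Ici 0) ∧ StrictMonoOn φ (Set.Ici 0) ∧ φ 0 = 0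

/-- A K∞-function: a K-function that tends to `∞`. -/
def IsKInfFun (φ : ℝ → ℝ) : Prop :=
  IsKFun φ ∧ Tendsto φ atTop atTop

/-- A KL-function. -/
def IsKLFun (β : ℝ → ℝ → ℝ) : Prop :=
  (∀ t ∈ Set.Ici (0:ℝ), IsKFun fun s => β s t) ∧
  ∀ s ∈ Set.Ici (0:ℝ), AntitoneOn (β s) (Set.Ici 0) ∧ Tendsto (β s) atTop (𝓝 0)

lemma IsKFun.nonneg {φ : ℝ → ℝ} (h : IsKFun φ) {s : ℝ} (hs : 0 ≤ s) : 0 ≤ φ s := by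
  have := h.2.1.monotoneOn (Set.mem_Ici.2 le_rfl) hs hs
  rwa [h.2.2] at this

lemma IsKFun.mono {φ : ℝ → ℝ} (h : IsKFun φ) {s t : ℝ} (hs : 0 ≤ s) (hst : s ≤ t) :
    φ s ≤ φ t :=
  h.2.1.monotoneOn hs (hs.trans hst) hst

lemma IsKFun.comp {φ ψ : ℝ → ℝ} (h : IsKFun φ) (g : IsKFun ψ) : IsKFun fun s => φ (ψ s) := by
  have hm : Set.MapsTo ψ (Set.Ici 0) (Set.Ici 0) := fun s hs => g.nonneg hs
  exact ⟨h.1.comp g.1 hm, fun a ha b hb hab => h.2.1 (hm ha) (hm hb) (g.2.1 ha hb hab),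
    by simp [g.2.2, h.2.2]⟩

lemma IsKInfFun.comp {φ ψ : ℝ → ℝ} (h : IsKInfFun φ) (g : IsKInfFun ψ) :
    IsKInfFun fun s => φ (ψ s) :=
  ⟨h.1.comp g.1, h.2.comp g.2⟩

lemma IsKFun.tendsto_zero {φ : ℝ → ℝ} (h : IsKFun φ) : Tendsto φ (𝓝[≥] 0) (𝓝 0) := by
  have := h.1 0 (Set.mem_Ici.2 le_rfl)
  rwa [ContinuousWithinAt, h.2.2] at this

lemma isKFun_mul {c : ℝ} (hc : 0 < c) : IsKFun fun s => c * s :=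
  ⟨by fun_prop, fun _ _ _ _ hab => mul_lt_mul_of_pos_left hab hc, by simp⟩

/-- The sum of the identity and a nonnegative multiple of a K-function is K∞. -/
lemma IsKFun.id_add {ρ : ℝ → ℝ} (h : IsKFun ρ) {c : ℝ} (hc : 0 ≤ c) :
    IsKInfFun fun s => s + c * ρ s := by
  refine ⟨⟨continuousOn_id.add (continuousOn_const.mul h.1), fun a ha b hb hab => ?_, ?_⟩, ?_⟩
  · have := mul_le_mul_of_nonneg_left (h.mono ha hab.le) hc
    simp only
    linarith
  · simp [h.2.2]
  · refine tendsto_atTop_mono' _ ?_ tendsto_id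
    filter_upwards [eventually_ge_atTop 0] with s hs
    have := mul_nonneg hc (h.nonneg hs)
    simp only [id]
    linarith

/-- A K∞-function is an order automorphism of `[0,∞)`, so its inverse is again K∞. -/
lemma IsKInfFun.exists_inv {φ : ℝ → ℝ} (h : IsKInfFun φ) :
    ∃ ψ, IsKInfFun ψ ∧ (∀ s, 0 ≤ s → ψ (φ s) = s) ∧ ∀ s, 0 ≤ s → φ (ψ s) = s := by
  obtain ⟨hk, ht⟩ := h
  let F : Set.Ici (0:ℝ) → Set.Ici (0:ℝ) := fun s => ⟨φ s, hk.nonneg s.2⟩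
  have hF : StrictMono F := fun a b hab => hk.2.1 a.2 b.2 hab
  have hS : Function.Surjective F := by
    rintro ⟨y, hy⟩
    obtain ⟨b, hb0, hb⟩ := ((eventually_ge_atTop (0:ℝ)).and (ht.eventually_ge_atTop y)).exists
    obtain ⟨s, hs, hs'⟩ := intermediate_value_Icc hb0 (hk.1.mono Set.Icc_subset_Ici_self)
      (show y ∈ Set.Icc (φ 0) (φ b) from ⟨by rw [hk.2.2]; exact hy, hb⟩)
    exact ⟨⟨s, hs.1⟩, Subtype.ext hs'⟩
  let e := hF.orderIsoOfSurjective F hS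
  have hright : ∀ s, 0 ≤ s → φ (e.symm ⟨max s 0, Set.mem_Ici.2 (le_max_right _ _)⟩) = s := fun s hs => by
    have := congrArg Subtype.val (e.apply_symm_apply ⟨max s 0, Set.mem_Ici.2 (le_max_right _ _)⟩)
    exact this.trans (max_eq_left hs)
  have hleft : ∀ s, 0 ≤ s → ((e.symm ⟨max (φ s) 0, Set.mem_Ici.2 (le_max_right _ _)⟩ : Set.Ici (0:ℝ)) : ℝ) = s :=
    fun s hs => hk.2.1.injOn (e.symm _).2 hs (hright _ (hk.nonneg hs))
  have hsm : StrictMonoOn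
      (fun s => ((e.symm ⟨max s 0, Set.mem_Ici.2 (le_max_right _ _)⟩ : Set.Ici (0:ℝ)) : ℝ))
      (Set.Ici 0) := by
    intro a ha b hb hab
    refine e.symm.strictMono (Subtype.mk_lt_mk.2 ?_)
    rwa [max_eq_left ha, max_eq_left hb]
  refine ⟨fun s => e.symm ⟨max s 0, Set.mem_Ici.2 (le_max_right _ _)⟩, ⟨⟨?_, hsm, ?_⟩, ?_⟩, hleft, hright⟩
  · have := e.symm.continuous
    fun_prop
  · have := hleft 0 le_rfl
    rwa [hk.2.2] at this
  · refine tendsto_atTop.2 fun b => ?_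
    filter_upwards [eventually_ge_atTop (φ (max b 0))] with s hs
    have h0 := hk.nonneg (le_max_right b 0)
    have := hsm.monotoneOn h0 (h0.trans hs) hs
    simp only [hleft _ (le_max_right b 0)] at this
    exact (le_max_left _ _).trans this

/-- The inverses of `v ↦ v + (t/2) * ρ v`, indexed by `t`, form a KL-function `B`; the last clause
is the form in which it bounds trajectories. Precomposition with `α` and postcomposition with `κ`
keep the KL property. -/
lemma exists_KL {ρ α κ : ℝ → ℝ} (hρ : IsKInfFun ρ) (hα : IsKFun α) (hκ : IsKFun κ) :
    ∃ B : ℝ → ℝ → ℝ, IsKLFun (fun s t => κ (B (α s) t)) ∧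
      ∀ t v s, 0 ≤ t → 0 ≤ v → 0 ≤ s → v + t / 2 * ρ v ≤ s → v ≤ B s t := by
  -- the truncation `max t 0` lets the inverse be chosen for every real `t`
  have hinv := fun t : ℝ =>
    (hρ.1.id_add (show (0:ℝ) ≤ max t 0 / 2 by positivity)).exists_inv
  choose b hb hbl hbr using hinv
  obtain ⟨ρi, hρi, hρl, -⟩ := hρ.exists_inv
  have key : ∀ t v s, 0 ≤ t → 0 ≤ v → 0 ≤ s → v + t / 2 * ρ v ≤ s → v ≤ b t s := by
    intro t v s ht hv hs h
    have h1 := hbl t v hv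
    rw [max_eq_left ht] at h1
    rw [← h1]
    exact (hb t).1.mono (add_nonneg hv (mul_nonneg (by positivity) (hρ.1.nonneg hv))) h
  have hbr' : ∀ t s, 0 ≤ t → 0 ≤ s → b t s + t / 2 * ρ (b t s) = s := by
    intro t s ht hs
    have := hbr t s hs
    rwa [max_eq_left ht] at this
  refine ⟨fun s t => b t s, ⟨fun t _ => hκ.comp ((hb t).1.comp hα), fun s hs => ⟨?_, ?_⟩⟩, key⟩
  · intro t₁ ht₁ t₂ ht₂ h12
    have hs' := hα.nonneg hs
    have h0 := (hb t₂).1.nonneg hs'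
    refine hκ.mono h0 (key t₁ _ _ ht₁ h0 hs' ?_)
    have h1 := hbr' t₂ _ ht₂ hs'
    have h2 := mul_le_mul_of_nonneg_right h12 (hρ.1.nonneg h0)
    linarith
  · have hs' := hα.nonneg hs
    -- `ρ (b t (α s)) ≤ 2 * α s / t` tends to `0`
    have hlim : Tendsto (fun t : ℝ => κ (ρi (2 * α s / t))) atTop (𝓝 0) := by
      refine (hκ.comp hρi.1).tendsto_zero.comp (tendsto_nhdsWithin_iff.2 ⟨?_, ?_⟩)
      · exact tendsto_const_nhds.div_atTop tendsto_id
      · filter_upwards [eventually_gt_atTop 0] with t ht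
        exact Set.mem_Ici.2 (by positivity)
    refine tendsto_of_tendsto_of_tendsto_of_le_of_le' tendsto_const_nhds hlim ?_ ?_
    · exact Eventually.of_forall fun t => hκ.nonneg ((hb t).1.nonneg hs')
    · filter_upwards [eventually_gt_atTop 0] with t ht
      have h0 := (hb t).1.nonneg hs'
      refine hκ.mono h0 ?_
      have h1 := hbr' t _ ht.le hs'
      rw [← hρl _ h0]
      refine hρi.1.mono (hρ.1.nonneg h0) ?_
      rw [le_div_iff₀ ht]
      linarith

/-- Scalar comparison principle for `v⁺ ≤ v - ρ v + d`. With `ρ g = 2 d` the interval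
`v ≤ g + d` is invariant, and outside it each step decreases `v` by at least `ρ v / 2`; as `v` is
then decreasing, `ρ (v j)` bounds all the earlier decrements from below. -/
lemma decay_or_small {ρ : ℝ → ℝ} (hρ : IsKFun ρ) {v : ℕ → ℝ} {d g : ℝ} {k : ℕ}
    (hv : ∀ j, 0 ≤ v j) (hg : 0 ≤ g) (hgd : ρ g = 2 * d)
    (hstep : ∀ j < k, v (j + 1) ≤ v j - ρ (v j) + d) :
    ∀ j ≤ k, v j ≤ g + d ∨ v j + (j : ℝ) / 2 * ρ (v j) ≤ v 0 := by
  intro j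
  induction j with
  | zero => intro _; right; simp
  | succ j ih =>
    intro hj
    have hs := hstep j hj
    have hρ0 := hρ.nonneg (hv j)
    rcases le_or_gt (v j) g with hjg | hjg
    · left; linarith
    · have h1 := hρ.mono hg hjg.le
      have h2 : v (j + 1) ≤ v j := by linarith
      rcases ih (by omega) with h | h
      · left; linarith
      · right
        have h3 := mul_le_mul_of_nonneg_left (hρ.mono (hv (j + 1)) h2)
          (show (0:ℝ) ≤ ((j + 1 : ℕ) : ℝ) / 2 by positivity)
        push_cast at h3 ⊢
        linarith

/-- Lemma 2 (Goulart et al., case (i)): a Lipschitz Lyapunov function for the undisturbed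
system is an ISS-Lyapunov function, and the origin is ISS, when `f` is Lipschitz on `X × W`. -/
theorem statement1 {nx nw : ℕ}
    (f : EuclideanSpace ℝ (Fin nx) → EuclideanSpace ℝ (Fin nw) → EuclideanSpace ℝ (Fin nx))
    (X : Set (EuclideanSpace ℝ (Fin nx))) (W : Set (EuclideanSpace ℝ (Fin nw)))
    (hW : IsBounded W) (h0W : (0 : EuclideanSpace ℝ (Fin nw)) ∈ W)
    (hf : ∃ L : NNReal, LipschitzOnWith L
      (fun p : EuclideanSpace ℝ (Fin nx) × EuclideanSpace ℝ (Fin nw) => f p.1 p.2) (X ×ˢ W))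
    (h0X : (0 : EuclideanSpace ℝ (Fin nx)) ∈ interior X)
    (hinv : ∀ x ∈ X, ∀ w ∈ W, f x w ∈ X)
    (V : EuclideanSpace ℝ (Fin nx) → ℝ)
    (hVlip : ∃ L : NNReal, LipschitzOnWith L V X) (hVnn : ∀ x ∈ X, 0 ≤ V x)
    (α₁ α₂ α₃ : ℝ → ℝ)
    (hα₁ : IsKInfFun α₁) (hα₂ : IsKInfFun α₂) (hα₃ : IsKInfFun α₃)
    (hlow : ∀ x ∈ X, α₁ ‖x‖ ≤ V x) (hup : ∀ x ∈ X, V x ≤ α₂ ‖x‖)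
    (hdec : ∀ x ∈ X, V (f x 0) - V x ≤ -α₃ ‖x‖) :
    (∃ σ : ℝ → ℝ, IsKFun σ ∧
      ∀ x ∈ X, ∀ w ∈ W, V (f x w) - V x ≤ -α₃ ‖x‖ + σ ‖w‖) ∧
    ∃ (β : ℝ → ℝ → ℝ) (γ : ℝ → ℝ), IsKLFun β ∧ IsKFun γ ∧
      ∀ (x : ℕ → EuclideanSpace ℝ (Fin nx)) (w : ℕ → EuclideanSpace ℝ (Fin nw)),
        x 0 ∈ X → (∀ t, w t ∈ W) → (∀ k, x (k+1) = f (x k) (w k)) →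
        ∀ k, 1 ≤ k → ‖x k‖ ≤ β ‖x 0‖ (k : ℝ) + γ (⨆ t : Fin k, ‖w (t : ℕ)‖) := by
  obtain ⟨Lf, hLf⟩ := hf
  obtain ⟨Lv, hLv⟩ := hVlip
  set c : ℝ := Lv * Lf + 1 with hc
  have hc0 : 0 < c := by positivity
  have hISS : ∀ x ∈ X, ∀ w ∈ W, V (f x w) - V x ≤ -α₃ ‖x‖ + c * ‖w‖ := by
    intro x hx w hw
    have h1 := hLv.dist_le_mul _ (hinv x hx w hw) _ (hinv x hx 0 h0W)
    have h2 := hLf.dist_le_mul (x, w) ⟨hx, hw⟩ (x, 0) ⟨hx, h0W⟩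
    have h3 : dist (x, w) (x, (0 : EuclideanSpace ℝ (Fin nw))) = ‖w‖ := by
      simp [Prod.dist_eq]
    rw [h3] at h2
    have h4 := (abs_le.1 (Real.dist_eq _ _ ▸ h1)).2
    have h5 := mul_le_mul_of_nonneg_left h2 Lv.2
    have h6 := hdec x hx
    simp only [NNReal.val_eq_coe] at h5
    have h7 := norm_nonneg w
    rw [hc]
    linarith
  refine ⟨⟨fun s => c * s, isKFun_mul hc0, hISS⟩, ?_⟩
  obtain ⟨a₁, ha₁, ha₁l, -⟩ := hα₁.exists_inv
  obtain ⟨a₂, ha₂, ha₂l, -⟩ := hα₂.exists_inv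
  have hρ : IsKInfFun fun s => α₃ (a₂ s) := hα₃.comp ha₂
  obtain ⟨r, hr, -, hrr⟩ := hρ.exists_inv
  obtain ⟨B, hB, hBv⟩ := exists_KL hρ hα₂.1 ha₁.1
  -- the radius `d + r (2 * d)` of the invariant interval, as a K-function of `d`
  have hg : IsKFun fun d => d + 1 * r (2 * d) :=
    ((hr.1.comp (isKFun_mul two_pos)).id_add zero_le_one).1
  have hγ : IsKFun fun s => a₁ (c * s + 1 * r (2 * (c * s))) :=
    ha₁.1.comp (hg.comp (isKFun_mul hc0))
  refine ⟨_, _, hB, hγ, ?_⟩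
  intro x w hx0 hw hx k hk
  have hxX : ∀ j, x j ∈ X := by
    intro j
    induction j with
    | zero => exact hx0
    | succ j ih => rw [hx]; exact hinv _ ih _ (hw j)
  set S := ⨆ t : Fin k, ‖w (t : ℕ)‖ with hS
  have hwS : ∀ j < k, ‖w j‖ ≤ S := fun j hj =>
    le_ciSup (f := fun t : Fin k => ‖w (t : ℕ)‖) (Set.finite_range _).bddAbove ⟨j, hj⟩
  have hS0 : 0 ≤ S := (norm_nonneg _).trans (hwS 0 hk)
  have hstep : ∀ j < k, V (x (j + 1)) ≤ V (x j) - α₃ (a₂ (V (x j))) + c * S := by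
    intro j hj
    have h1 := hISS _ (hxX j) _ (hw j)
    rw [← hx] at h1
    have h2 := mul_le_mul_of_nonneg_left (hwS j hj) hc0.le
    have h3 := hρ.1.mono (hVnn _ (hxX j)) (hup _ (hxX j))
    simp only [ha₂l _ (norm_nonneg _)] at h3
    linarith
  have hmain := decay_or_small hρ.1 (fun j => hVnn _ (hxX j))
    (hr.1.nonneg (by positivity : 0 ≤ 2 * (c * S))) (hrr _ (by positivity)) hstep k le_rfl
  have hn := norm_nonneg (x k)
  have hlk := ha₁.1.mono (hα₁.1.nonneg hn) (hlow _ (hxX k))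
  rw [ha₁l _ hn] at hlk
  have hβ0 := ((hB.1 k (Set.mem_Ici.2 (Nat.cast_nonneg k))).nonneg (norm_nonneg (x 0)))
  have hγ0 := hγ.nonneg hS0
  simp only at hβ0 hγ0 ⊢
  rcases hmain with h | h
  · have := ha₁.1.mono (hVnn _ (hxX k)) (h.trans_eq (by ring : _ = c * S + 1 * r (2 * (c * S))))
    linarith
  · have h1 := hBv k _ _ (Nat.cast_nonneg k) (hVnn _ (hxX k)) (hα₂.1.nonneg (norm_nonneg (x 0)))
      (h.trans (hup _ hx0))
    have := ha₁.1.mono (hVnn _ (hxX k)) h1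
    linarith
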